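/- (Proposition 2, Nash's existence theorem for the ST game.) Every two-player game with finite nonempty action sets and real-valued utilities has at least one mixed-strategy Nash equilibrium: there exist mixed strategies p* ∈ Δ(A1) and q* ∈ Δ(A2) such that ū1(p*, q*) ≥ ū1(p, q*) for every p ∈ Δ(A1), and ū2(p*, q*) ≥ ū2(p*, q) for every q ∈ Δ(A2). -/

import Mathlib

namespace NashAux

def Dom {I X L : Type*} [LinearOrder L] (key : I → X → L) (σ : Finset X) : Prop :=
  ∀ y, ∃ i, ∀ x ∈ σ, key i y ≤ key i x

def IsTop {I X L : Type*} [LinearOrder L] (key : I → X → L) (m : I → X) (k : I) (y : X) : Prop :=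
  (∀ l, l ≠ k → key l (m l) < key l y) ∧
    ∀ z, (∀ l, l ≠ k → key l (m l) < key l z) → key k z ≤ key k y

section
variable {I X L : Type*} [Fintype I] [DecidableEq I] [Fintype X] [DecidableEq X] [LinearOrder L]

lemma exists_isTop (key : I → X → L) (m : I → X) (k : I)
    (h : ∃ z, ∀ l, l ≠ k → key l (m l) < key l z) : ∃ y, IsTop key m k y := by
  classical
  obtain ⟨z, hz⟩ := h
  obtain ⟨y, hy, hmax⟩ := Finset.exists_max_image
    (Finset.univ.filter fun z => ∀ l, l ≠ k → key l (m l) < key l z) (key k) ⟨z, by simpa using hz⟩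
  exact ⟨y, by simpa using hy, fun z hz => hmax z (by simpa using hz)⟩

lemma isTop_unique (key : I → X → L) (hk : ∀ i, Function.Injective (key i)) (m : I → X) (k : I)
    {y z : X} (hy : IsTop key m k y) (hz : IsTop key m k z) : y = z :=
  hk k (le_antisymm (hz.2 y hy.1) (hy.2 z hz.1))

/-- structure of a door -/
lemma door_struct (key : I → X → L) (hk : ∀ i, Function.Injective (key i))
    (τ : Finset X) (hne : τ.Nonempty) (hc : τ.card + 1 = Fintype.card I) (hd : Dom key τ) :
    ∃ m : I → X, (∀ i, m i ∈ τ) ∧ (∀ i, ∀ x ∈ τ, key i (m i) ≤ key i x) ∧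
      ∃ i j, i ≠ j ∧ m i = m j ∧
        (∀ k l, m k = m l → k ≠ i → l ≠ i → k = l) ∧
        ∀ y, (y ∉ τ ∧ Dom key (insert y τ)) ↔ (IsTop key m i y ∨ IsTop key m j y) := by
  classical
  have h1 : ∀ i, ∃ x ∈ τ, ∀ x' ∈ τ, key i x ≤ key i x' := fun i =>
    Finset.exists_min_image τ (key i) hne
  choose m hm hmin using h1
  refine ⟨m, hm, hmin, ?_⟩
  have hsurj : ∀ x ∈ τ, ∃ i, m i = x := by
    intro x hx
    obtain ⟨i, hi⟩ := hd x
    exact ⟨i, hk i (le_antisymm (hmin i x hx) (hi _ (hm i)))⟩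
  have hcard : τ.card < (Finset.univ : Finset I).card := by rw [Finset.card_univ]; omega
  obtain ⟨i, -, j, -, hij, hmij⟩ := Finset.exists_ne_map_eq_of_card_lt_of_maps_to hcard
    (f := m) (fun i _ => hm i)
  have key1 : ∀ S : Finset I, (∀ x ∈ τ, ∃ l ∈ S, m l = x) → ∀ k, k ∉ S →
      (S = Finset.univ.erase k ∧ Set.InjOn m S) := by
    intro S hS k hkS
    have himg : S.image m = τ := by
      ext x
      simp only [Finset.mem_image]
      constructor
      · rintro ⟨l, _, rfl⟩; exact hm l
      · exact hS x
    have hsub : S ⊆ Finset.univ.erase k := by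
      intro l hl; simp; rintro rfl; exact hkS hl
    have hce : (Finset.univ.erase k).card = τ.card := by
      rw [Finset.card_erase_of_mem (Finset.mem_univ _), Finset.card_univ]; omega
    have hle : τ.card ≤ S.card := himg ▸ Finset.card_image_le
    have hSe : S = Finset.univ.erase k := Finset.eq_of_subset_of_card_le hsub (by omega)
    refine ⟨hSe, ?_⟩
    rw [← Finset.card_image_iff, himg, hSe, hce]
  have inj_of : ∀ a b, a ≠ b → m a = m b → Set.InjOn m (Finset.univ.erase a : Finset I) := by
    intro a b hab hmab
    refine (key1 (Finset.univ.erase a) ?_ a (by simp)).2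
    intro x hx
    obtain ⟨l, hl⟩ := hsurj x hx
    by_cases h : l = a
    · exact ⟨b, by simpa using hab.symm, by rw [← hmab, ← h, hl]⟩
    · exact ⟨l, by simpa using h, hl⟩
  have hinj := inj_of i j hij hmij
  refine ⟨i, j, hij, hmij, fun k l hkl hki hli => hinj (by simpa using hki) (by simpa using hli) hkl,
    ?_⟩
  have back : ∀ a b, a ≠ b → m a = m b → ∀ y, IsTop key m a y → y ∉ τ ∧ Dom key (insert y τ) := by
    intro a b hab hmab y hy
    constructor
    · intro hyτ
      obtain ⟨l, hl⟩ := hsurj y hyτ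
      by_cases h : l = a
      · have := hy.1 b hab.symm
        rw [← hmab, ← h, hl] at this
        exact lt_irrefl _ this
      · have := hy.1 l h
        rw [hl] at this
        exact lt_irrefl _ this
    · intro z
      by_cases hz : ∀ l, l ≠ a → key l (m l) < key l z
      · refine ⟨a, ?_⟩
        have hzy := hy.2 z hz
        obtain ⟨l, hl⟩ := hd y
        have hla : l = a := by
          by_contra h
          exact absurd (hl _ (hm l)) (not_le.2 (hy.1 l h))
        subst hla
        intro x hx
        rcases Finset.mem_insert.1 hx with rfl | hx
        · exact hzy
        · exact hzy.trans (hl x hx)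
      · push Not at hz
        obtain ⟨l, hla, hl⟩ := hz
        refine ⟨l, ?_⟩
        intro x hx
        rcases Finset.mem_insert.1 hx with rfl | hx
        · exact hl.trans (hy.1 l hla).le
        · exact hl.trans (hmin l x hx)
  intro y
  constructor
  · rintro ⟨hyτ, hdy⟩
    obtain ⟨k, hky⟩ := hdy y
    set S : Finset I := Finset.univ.filter fun l => key l (m l) < key l y with hS
    have hkS : k ∉ S := by
      simp [hS]; exact hky _ (Finset.mem_insert_of_mem (hm k))
    have hSsurj : ∀ x ∈ τ, ∃ l ∈ S, m l = x := by
      intro x hx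
      obtain ⟨l, hl⟩ := hdy x
      have hml : m l = x :=
        hk l (le_antisymm (hmin l x hx) (hl _ (Finset.mem_insert_of_mem (hm l))))
      refine ⟨l, ?_, hml⟩
      simp only [hS, Finset.mem_filter, Finset.mem_univ, true_and]
      rw [hml]
      refine lt_of_le_of_ne (hl y (Finset.mem_insert_self _ _)) ?_
      intro h
      exact hyτ (hk l h ▸ hx)
    obtain ⟨hSe, hSi⟩ := key1 S hSsurj k hkS
    have hkij : k = i ∨ k = j := by
      by_contra h
      push Not at h
      exact hij (hSi (by rw [hSe]; simpa using h.1.symm) (by rw [hSe]; simpa using h.2.symm) hmij)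
    have hT : IsTop key m k y := by
      constructor
      · intro l hl
        have : l ∈ S := by rw [hSe]; simpa using hl
        simpa [hS] using this
      · intro z hz
        obtain ⟨l, hl⟩ := hdy z
        by_cases h : l = k
        · subst h; exact hl y (Finset.mem_insert_self _ _)
        · exact absurd (hl _ (Finset.mem_insert_of_mem (hm l))) (not_le.2 (hz l h))
    rcases hkij with rfl | rfl
    · exact Or.inl hT
    · exact Or.inr hT
  · rintro (h | h)
    · exact back i j hij hmij y h
    · exact back j i hij.symm hmij.symm y h

lemma top_ne (key : I → X → L) (τ : Finset X) (hd : Dom key τ) (m : I → X)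
    (hm : ∀ i, m i ∈ τ) {i j : I} (hij : i ≠ j) {y z : X}
    (hy : IsTop key m i y) (hz : IsTop key m j z) : y ≠ z := by
  rintro rfl
  obtain ⟨l, hl⟩ := hd y
  have := hl _ (hm l)
  by_cases h : l = i
  · exact absurd this (not_le.2 (hz.1 l (h ▸ hij)))
  · exact absurd this (not_le.2 (hy.1 l h))

/-- rooms above a door, as points -/
lemma rooms_card (key : I → X → L) (τ : Finset X) [DecidablePred (Dom key (I := I) (X := X))]
    (hc : τ.card + 1 = Fintype.card I) :
    ((Finset.univ.filter fun σ : Finset X => σ.card = Fintype.card I ∧ Dom key σ ∧ τ ⊆ σ)).card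
      = (Finset.univ.filter fun y : X => y ∉ τ ∧ Dom key (insert y τ)).card := by
  symm
  apply Finset.card_bij (fun y _ => insert y τ)
  · intro y hy
    simp only [Finset.mem_filter, Finset.mem_univ, true_and] at hy ⊢
    exact ⟨by rw [Finset.card_insert_of_notMem hy.1, hc], hy.2, Finset.subset_insert _ _⟩
  · intro y hy z hz h
    simp only [Finset.mem_filter, Finset.mem_univ, true_and] at hy hz
    have : y ∈ insert z τ := h ▸ Finset.mem_insert_self y τ
    rcases Finset.mem_insert.1 this with h | h
    · exact h
    · exact absurd h hy.1
  · intro σ hσ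
    simp only [Finset.mem_filter, Finset.mem_univ, true_and] at hσ
    obtain ⟨a, ha, rfl⟩ := Finset.exists_eq_insert_iff.2 ⟨hσ.2.2, by omega⟩
    exact ⟨a, by simpa using ⟨ha, hσ.2.1⟩, rfl⟩

lemma scarf [Nontrivial I] (key : I → X → L) (hk : ∀ i, Function.Injective (key i))
    (e : I → X) (h1 : ∀ i x, x ≠ e i → key i (e i) < key i x)
    (h2 : ∀ i j x, j ≠ i → x ∉ Set.range e → key i x < key i (e j))
    (c : X → I) (hce : ∀ i, c (e i) = i) :
    ∃ σ : Finset X, (∀ i, ∃ x ∈ σ, c x = i) ∧ Dom key σ := by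
  classical
  by_contra hcon
  push Not at hcon
  obtain ⟨i0⟩ : Nonempty I := inferInstance
  have hei : Function.Injective e := fun a b h => by rw [← hce a, h, hce]
  have hn : 2 ≤ Fintype.card I := Fintype.one_lt_card
  let R : Finset (Finset X) := Finset.univ.filter fun σ => σ.card = Fintype.card I ∧ Dom key σ
  let D : Finset (Finset X) := Finset.univ.filter fun τ =>
    τ.card + 1 = Fintype.card I ∧ Dom key τ ∧ τ.image c = Finset.univ.erase i0
  let E0 : Finset X := (Finset.univ.erase i0).image e
  have hE0mem : ∀ x, x ∈ E0 ↔ ∃ k, k ≠ i0 ∧ e k = x := by simp [E0]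
  have hE0D : E0 ∈ D := by
    simp only [D, Finset.mem_filter, Finset.mem_univ, true_and]
    refine ⟨?_, ?_, ?_⟩
    · rw [Finset.card_image_of_injective _ hei, Finset.card_erase_of_mem (Finset.mem_univ _),
        Finset.card_univ]; omega
    · intro y
      by_cases hy : y ∈ Set.range e
      · obtain ⟨k, rfl⟩ := hy
        refine ⟨k, fun x _ => ?_⟩
        by_cases hx : x = e k
        · rw [hx]
        · exact (h1 k x hx).le
      · refine ⟨i0, fun x hx => ?_⟩
        obtain ⟨k, hk0, rfl⟩ := (hE0mem x).1 hx
        exact (h2 i0 k y hk0 hy).le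
    · rw [Finset.image_image]
      have : c ∘ e = id := funext hce
      rw [this, Finset.image_id]
  have hroomE0 : (R.filter fun σ => E0 ⊆ σ).card = 1 := by
    have hD := hE0D
    simp only [D, Finset.mem_filter, Finset.mem_univ, true_and] at hD
    have hne : E0.Nonempty := Finset.card_pos.1 (by omega)
    obtain ⟨m, hm, hmin, i, j, hij, hmij, hinj, hiff⟩ := door_struct key hk E0 hne hD.1 hD.2.1
    have hmk : ∀ k, k ≠ i0 → m k = e k := by
      intro k hk0
      by_contra h
      exact absurd (hmin k (e k) ((hE0mem _).2 ⟨k, hk0, rfl⟩)) (not_le.2 (h1 k _ h))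
    have htop : ∃ y, IsTop key m i0 y := by
      apply exists_isTop
      refine ⟨e i0, fun l hl => ?_⟩
      rw [hmk l hl]
      exact h1 l _ (fun h => hl (hei h).symm)
    have hnot : ∀ j, j ≠ i0 → m i0 = m j → ∀ y, ¬ IsTop key m j y := by
      intro j hj hmj y hy
      have h3 := hy.1 i0 hj.symm
      rw [hmj, hmk j hj] at h3
      have hyr : y ∈ Set.range e := by
        by_contra h
        exact absurd h3 (not_lt.2 (h2 i0 j y hj h).le)
      obtain ⟨k, rfl⟩ := hyr
      by_cases hkj : k = j
      · subst hkj; exact lt_irrefl _ h3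
      · have h4 := hy.1 k hkj
        by_cases hmk' : m k = e k
        · rw [hmk'] at h4; exact lt_irrefl _ h4
        · exact absurd h4 (not_lt.2 (h1 k _ hmk').le)
    have hiff' : ∀ y, (y ∉ E0 ∧ Dom key (insert y E0)) ↔ IsTop key m i0 y := by
      intro y
      rw [hiff]
      have : i = i0 ∨ j = i0 := by
        by_contra h
        push Not at h
        rw [hmk i h.1, hmk j h.2] at hmij
        exact hij (hei hmij)
      rcases this with rfl | rfl
      · simp [hnot j hij.symm hmij]
      · simp [hnot i hij hmij.symm]
    have : R.filter (fun σ => E0 ⊆ σ) = Finset.univ.filter fun σ : Finset X =>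
        σ.card = Fintype.card I ∧ Dom key σ ∧ E0 ⊆ σ := by
      ext σ; simp [R, and_assoc]
    rw [this, rooms_card key E0 hD.1]
    obtain ⟨y, hy⟩ := htop
    rw [Finset.card_eq_one]
    refine ⟨y, ?_⟩
    ext z
    simp only [Finset.mem_filter, Finset.mem_univ, true_and, Finset.mem_singleton]
    rw [hiff']
    exact ⟨fun h => isTop_unique key hk m i0 h hy, fun h => h ▸ hy⟩
  have hroom : ∀ τ ∈ D, τ ≠ E0 → (R.filter fun σ => τ ⊆ σ).card = 2 := by
    intro τ hτ hτE
    have hD := hτ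
    simp only [D, Finset.mem_filter, Finset.mem_univ, true_and] at hD
    have hne : τ.Nonempty := Finset.card_pos.1 (by omega)
    have hns : ∃ t ∈ τ, t ∉ Set.range e := by
      by_contra h
      push Not at h
      apply hτE
      apply Finset.eq_of_subset_of_card_le
      · intro x hx
        obtain ⟨k, rfl⟩ := h x hx
        refine (hE0mem _).2 ⟨k, ?_, rfl⟩
        have : c (e k) ∈ τ.image c := Finset.mem_image_of_mem _ hx
        rw [hD.2.2, hce] at this
        simpa using this
      · have := hE0D
        simp only [D, Finset.mem_filter, Finset.mem_univ, true_and] at this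
        omega
    obtain ⟨t, htτ, ht⟩ := hns
    obtain ⟨m, hm, hmin, i, j, hij, hmij, hinj, hiff⟩ := door_struct key hk τ hne hD.1 hD.2.1
    have htop : ∀ k, ∃ y, IsTop key m k y := by
      intro k
      apply exists_isTop
      exact ⟨e k, fun l hl => (hmin l t htτ).trans_lt (h2 l k t hl.symm ht)⟩
    have : R.filter (fun σ => τ ⊆ σ) = Finset.univ.filter fun σ : Finset X =>
        σ.card = Fintype.card I ∧ Dom key σ ∧ τ ⊆ σ := by
      ext σ; simp [R, and_assoc]
    rw [this, rooms_card key τ hD.1]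
    obtain ⟨y, hy⟩ := htop i
    obtain ⟨z, hz⟩ := htop j
    rw [Finset.card_eq_two]
    refine ⟨y, z, top_ne key τ hD.2.1 m hm hij hy hz, ?_⟩
    ext w
    simp only [Finset.mem_filter, Finset.mem_univ, true_and, Finset.mem_singleton,
      Finset.mem_insert]
    rw [hiff]
    constructor
    · rintro (h | h)
      · exact Or.inl (isTop_unique key hk m i h hy)
      · exact Or.inr (isTop_unique key hk m j h hz)
    · rintro (rfl | rfl)
      · exact Or.inl hy
      · exact Or.inr hz
  have hdoor : ∀ σ ∈ R, Even (D.filter fun τ => τ ⊆ σ).card := by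
    intro σ hσ
    simp only [R, Finset.mem_filter, Finset.mem_univ, true_and] at hσ
    rcases (D.filter fun τ => τ ⊆ σ).eq_empty_or_nonempty with h | ⟨τ, hτ⟩
    · rw [h]; simp
    · simp only [D, Finset.mem_filter, Finset.mem_univ, true_and] at hτ
      obtain ⟨⟨hτc, hτd, hτi⟩, hτσ⟩ := hτ
      obtain ⟨x, hx, rfl⟩ := Finset.exists_eq_insert_iff.2 ⟨hτσ, by omega⟩
      have hcinj : Set.InjOn c τ := by
        rw [← Finset.card_image_iff, hτi, Finset.card_erase_of_mem (Finset.mem_univ _),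
          Finset.card_univ]; omega
      have hcx : c x ≠ i0 := by
        intro h
        refine hcon (insert x τ) (fun i => ?_) hσ.2
        by_cases hi : i = i0
        · exact ⟨x, Finset.mem_insert_self _ _, by rw [h, hi]⟩
        · have : i ∈ τ.image c := by rw [hτi]; simpa using hi
          obtain ⟨y, hy, hyi⟩ := Finset.mem_image.1 this
          exact ⟨y, Finset.mem_insert_of_mem hy, hyi⟩
      have : c x ∈ τ.image c := by rw [hτi]; simpa using hcx
      obtain ⟨x', hx', hcx'⟩ := Finset.mem_image.1 this
      have hxx' : x ≠ x' := by rintro rfl; exact hx hx'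
      have : (D.filter fun τ' => τ' ⊆ insert x τ).card = 2 := by
        rw [Finset.card_eq_two]
        refine ⟨τ, (insert x τ).erase x', ?_, ?_⟩
        · intro h
          have : x' ∈ (insert x τ).erase x' := h ▸ hx'
          simp at this
        · ext ρ
          simp only [D, Finset.mem_filter, Finset.mem_univ, true_and, Finset.mem_singleton,
            Finset.mem_insert]
          constructor
          · rintro ⟨⟨hρc, hρd, hρi⟩, hρσ⟩
            by_cases hxρ : x ∈ ρ
            · right
              apply Finset.eq_of_subset_of_card_le
              · intro w hw
                refine Finset.mem_erase.2 ⟨?_, hρσ hw⟩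
                rintro rfl
                have : Set.InjOn c ρ := by
                  rw [← Finset.card_image_iff, hρi, Finset.card_erase_of_mem (Finset.mem_univ _),
                    Finset.card_univ]; omega
                exact hxx' (this hxρ hw hcx'.symm)
              · rw [Finset.card_erase_of_mem (Finset.mem_insert_of_mem hx'), hσ.1]; omega
            · left
              apply Finset.eq_of_subset_of_card_le
              · intro w hw
                rcases Finset.mem_insert.1 (hρσ hw) with rfl | h
                · exact absurd hw hxρ
                · exact h
              · omega
          · rintro (rfl | rfl)
            · exact ⟨⟨hτc, hτd, hτi⟩, hτσ⟩
            · refine ⟨⟨?_, ?_, ?_⟩, Finset.erase_subset _ _⟩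
              · rw [Finset.card_erase_of_mem (Finset.mem_insert_of_mem hx'), hσ.1]; omega
              · intro y
                obtain ⟨i, hi⟩ := hσ.2 y
                exact ⟨i, fun w hw => hi w (Finset.mem_of_mem_erase hw)⟩
              · rw [← hτi]
                ext k
                simp only [Finset.mem_image, Finset.mem_erase, Finset.mem_insert]
                constructor
                · rintro ⟨w, ⟨hw1, rfl | hw2⟩, rfl⟩
                  · exact ⟨x', hx', hcx'⟩
                  · exact ⟨w, hw2, rfl⟩
                · rintro ⟨w, hw, rfl⟩
                  by_cases hwx : w = x'
                  · exact ⟨x, ⟨hxx', Or.inl rfl⟩, by rw [hwx, hcx']⟩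
                  · exact ⟨w, ⟨hwx, Or.inr hw⟩, rfl⟩
      rw [this]; exact even_two
  have hdc : ∑ σ ∈ R, (D.filter fun τ => τ ⊆ σ).card = ∑ τ ∈ D, (R.filter fun σ => τ ⊆ σ).card := by
    simp only [Finset.card_filter]
    exact Finset.sum_comm
  have hev : Even (∑ σ ∈ R, (D.filter fun τ => τ ⊆ σ).card) := Finset.even_sum _ hdoor
  rw [hdc, ← Finset.add_sum_erase _ _ hE0D, hroomE0] at hev
  have hev2 : Even (∑ τ ∈ D.erase E0, (R.filter fun σ => τ ⊆ σ).card) := by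
    apply Finset.even_sum
    intro τ hτ
    rw [hroom τ (Finset.mem_of_mem_erase hτ) (Finset.ne_of_mem_erase hτ)]
    exact even_two
  rw [Nat.even_add] at hev
  exact absurd (hev.2 hev2) (by decide)
end

lemma grid {I : Type*} [Fintype I] [Nontrivial I] (N : ℕ) (col : (I → ℕ) → I) :
    ∃ x0 : I → ℕ, ∑ i, x0 i = N ∧ ∀ i, x0 i < Fintype.card I ∨
      ∃ x : I → ℕ, ∑ i, x i = N ∧ col x = i ∧
        ∀ k, x k < x0 k + Fintype.card I ∧ x0 k < x k + Fintype.card I := by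
  classical
  let T := {x : I → Fin (N + 1) // ∑ i, (x i : ℕ) = N}
  let encT := Fintype.equivFin T
  let encI := Fintype.equivFin I
  let key : I → T ⊕ I → ℕ ×ₗ ℕ := fun i => Sum.elim
    (fun t => toLex ((t.1 i : ℕ) + 1, (encT t : ℕ)))
    (fun j => if j = i then toLex (0, 0) else toLex (N + 2, (encI j : ℕ)))
  have hkl : ∀ i t, key i (Sum.inl t) = toLex ((t.1 i : ℕ) + 1, (encT t : ℕ)) := fun i t => rfl
  have hkr : ∀ i, key i (Sum.inr i) = toLex (0, 0) := fun i => by simp [key]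
  have hkr' : ∀ i j, j ≠ i → key i (Sum.inr j) = toLex (N + 2, (encI j : ℕ)) :=
    fun i j h => by simp [key, h]
  have hlt1 : ∀ i t, key i (Sum.inr i) < key i (Sum.inl t) := by
    intro i t
    rw [hkl, hkr, Prod.Lex.toLex_lt_toLex]
    left; simp
  have hlt2 : ∀ i j, j ≠ i → key i (Sum.inr i) < key i (Sum.inr j) := by
    intro i j h
    rw [hkr' i j h, hkr, Prod.Lex.toLex_lt_toLex]
    left; simp
  have hlt3 : ∀ i j t, j ≠ i → key i (Sum.inl t) < key i (Sum.inr j) := by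
    intro i j t h
    rw [hkr' i j h, hkl, Prod.Lex.toLex_lt_toLex]
    left
    have := (t.1 i).2
    simp only
    omega
  have hinj : ∀ i, Function.Injective (key i) := by
    rintro i (t | j) (t' | j') h
    · rw [hkl, hkl] at h
      have h' := congrArg (fun p => (ofLex p).2) h
      simp only [ofLex_toLex] at h'
      rw [encT.injective (Fin.ext h')]
    · by_cases hj : j' = i
      · subst hj; exact absurd h (hlt1 _ _).ne'
      · exact absurd h (hlt3 _ _ _ hj).ne
    · by_cases hj : j = i
      · subst hj; exact absurd h (hlt1 _ _).ne
      · exact absurd h (hlt3 _ _ _ hj).ne'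
    · by_cases hj : j = i
      · by_cases hj' : j' = i
        · rw [hj, hj']
        · subst hj; exact absurd h (hlt2 _ _ hj').ne
      · by_cases hj' : j' = i
        · subst hj'; exact absurd h (hlt2 _ _ hj).ne'
        · rw [hkr' i j hj, hkr' i j' hj'] at h
          have h' := congrArg (fun p => (ofLex p).2) h
          simp only [ofLex_toLex] at h'
          rw [encI.injective (Fin.ext h')]
  obtain ⟨σ, hcol, hdom⟩ := scarf key hinj Sum.inr
    (by
      rintro i (t | j) h
      · exact hlt1 i t
      · exact hlt2 i j (fun hj => h (by rw [hj])))
    (by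
      rintro i j (t | k) h hx
      · exact hlt3 i j t h
      · exact absurd ⟨k, rfl⟩ hx)
    (Sum.elim (fun t : T => col (fun i => (t.1 i : ℕ))) id) (fun i => rfl)
  have hC : ∀ i, ∃ m : ℕ, (Sum.inr i ∈ σ → m = 0) ∧ (∀ t : T, Sum.inl t ∈ σ → m ≤ t.1 i) ∧
      (Sum.inr i ∉ σ → ∃ t : T, Sum.inl t ∈ σ ∧ (t.1 i : ℕ) = m) := by
    intro i
    by_cases hi : Sum.inr i ∈ σ
    · exact ⟨0, fun _ => rfl, fun _ _ => Nat.zero_le _, fun h => absurd hi h⟩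
    · obtain ⟨x, hx, hxi⟩ := hcol i
      rcases x with t | j
      · obtain ⟨t', ht', hmin⟩ := Finset.exists_min_image
          (Finset.univ.filter fun t : T => (Sum.inl t : T ⊕ I) ∈ σ) (fun t => (t.1 i : ℕ))
          ⟨t, by simpa using hx⟩
        exact ⟨t'.1 i, fun h => absurd h hi, fun s hs => hmin s (by simpa using hs),
          fun _ => ⟨t', by simpa using ht', rfl⟩⟩
      · simp at hxi; subst hxi; exact absurd hx hi
  choose m hm0 hmle hmex using hC
  have hsum : N < ∑ i, m i + Fintype.card I := by
    by_contra hle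
    push Not at hle
    obtain ⟨i1⟩ : Nonempty I := inferInstance
    let y : I → ℕ := fun i => (m i + 1) + if i = i1 then N - (∑ i, m i + Fintype.card I) else 0
    have hy : ∑ i, y i = N := by
      simp only [y, Finset.sum_add_distrib, Finset.sum_ite_eq', Finset.mem_univ, if_true]
      simp
      omega
    have hyN : ∀ i, y i < N + 1 := by
      intro i
      have := Finset.single_le_sum (f := y) (fun _ _ => Nat.zero_le _) (Finset.mem_univ i)
      omega
    obtain ⟨i, hi⟩ := hdom (Sum.inl (⟨fun i => ⟨y i, hyN i⟩, hy⟩ : T))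
    by_cases his : Sum.inr i ∈ σ
    · exact absurd (hi _ his) (not_le.2 (hlt1 _ _))
    · obtain ⟨t, ht, hti⟩ := hmex i his
      refine absurd (hi _ ht) (not_le.2 ?_)
      rw [hkl, hkl, Prod.Lex.toLex_lt_toLex]
      left
      simp only [hti, y]
      omega
  have hub : ∀ t : T, Sum.inl t ∈ σ → ∀ k, (t.1 k : ℕ) < m k + Fintype.card I := by
    intro t ht k
    have h3 : ∑ i, ((t.1 i : ℕ) - m i) + ∑ i, m i = N := by
      rw [← Finset.sum_add_distrib]
      refine Eq.trans ?_ t.2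
      exact Finset.sum_congr rfl fun i _ => Nat.sub_add_cancel (hmle i t ht)
    have := Finset.single_le_sum (f := fun i => ((t.1 i : ℕ) - m i)) (fun _ _ => Nat.zero_le _)
      (Finset.mem_univ k)
    omega
  have hex : ∃ t : T, Sum.inl t ∈ σ := by
    by_contra h
    push Not at h
    have hall : ∀ i, Sum.inr i ∈ σ := by
      intro i
      by_contra hi
      obtain ⟨t, ht, _⟩ := hmex i hi
      exact h t ht
    obtain ⟨i1⟩ : Nonempty I := inferInstance
    let y : T := ⟨fun i => if i = i1 then ⟨N, by omega⟩ else 0, by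
      rw [Finset.sum_eq_single i1] <;> simp +contextual⟩
    obtain ⟨i, hi⟩ := hdom (Sum.inl y)
    exact absurd (hi _ (hall i)) (not_le.2 (hlt1 _ _))
  obtain ⟨t0, ht0⟩ := hex
  refine ⟨fun i => t0.1 i, t0.2, fun i => ?_⟩
  by_cases hi : Sum.inr i ∈ σ
  · left
    have := hub t0 ht0 i
    rwa [hm0 i hi, zero_add] at this
  · right
    obtain ⟨x, hx, hxi⟩ := hcol i
    rcases x with t | j
    · refine ⟨fun i => t.1 i, t.2, hxi, fun k => ?_⟩
      have a1 := hub t hx k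
      have a2 := hub t0 ht0 k
      have a3 := hmle k t hx
      have a4 := hmle k t0 ht0
      show (t.1 k : ℕ) < (t0.1 k : ℕ) + _ ∧ (t0.1 k : ℕ) < (t.1 k : ℕ) + _
      exact ⟨by omega, by omega⟩
    · simp at hxi; subst hxi; exact absurd hx hi

/-- approximate symmetric equilibrium -/
lemma approx {I : Type*} [Fintype I] [Nontrivial I] (M : I → I → ℝ) (ε : ℝ) (hε : 0 < ε) :
    ∃ z ∈ stdSimplex ℝ I, ∀ i, z i ≤ ε ∨ ∀ j, ∑ k, M j k * z k - ∑ k, M i k * z k ≤ ε := by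
  classical
  set n : ℝ := (Fintype.card I : ℝ) with hn
  set K : ℝ := ∑ i, ∑ j, |M i j| with hK
  have hK0 : 0 ≤ K := Finset.sum_nonneg fun i _ => Finset.sum_nonneg fun j _ => abs_nonneg _
  have hn0 : 0 ≤ n := Nat.cast_nonneg _
  obtain ⟨N, hN⟩ := exists_nat_gt ((n + 2 * K * n) / ε)
  have hNpos : (0 : ℝ) < N := lt_of_le_of_lt (by positivity) hN
  have hN' : n + 2 * K * n < ε * N := by rwa [div_lt_iff₀' hε] at hN
  have hcol : ∀ x : I → ℕ, ∃ i, ∀ j, ∑ k, M j k * (x k : ℝ) ≤ ∑ k, M i k * (x k : ℝ) := fun x =>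
    Finite.exists_max fun j => ∑ k, M j k * (x k : ℝ)
  choose col hcol using hcol
  obtain ⟨x0, hx0, hg⟩ := grid N col
  refine ⟨fun i => x0 i / N, ⟨fun i => by positivity, ?_⟩, fun i => ?_⟩
  · rw [← Finset.sum_div, ← Nat.cast_sum, hx0, div_self hNpos.ne']
  · rcases hg i with h | ⟨x, hx, hci, hd⟩
    · left
      rw [div_le_iff₀ hNpos]
      have : (x0 i : ℝ) ≤ n := by rw [hn]; exact_mod_cast h.le
      nlinarith [mul_nonneg hK0 hn0]
    · right
      intro j
      have hb : ∀ k, |(x0 k : ℝ) - x k| ≤ n := by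
        intro k
        have h1 : (x k : ℝ) ≤ x0 k + n := by rw [hn]; exact_mod_cast (hd k).1.le
        have h2 : (x0 k : ℝ) ≤ x k + n := by rw [hn]; exact_mod_cast (hd k).2.le
        rw [abs_le]; constructor <;> linarith
      have hc := hcol x j
      rw [hci] at hc
      have hdiff : ∀ l, |∑ k, M l k * (x0 k : ℝ) - ∑ k, M l k * (x k : ℝ)| ≤ K * n := by
        intro l
        rw [← Finset.sum_sub_distrib]
        calc |∑ k, (M l k * (x0 k : ℝ) - M l k * (x k : ℝ))|
            ≤ ∑ k, |M l k * (x0 k : ℝ) - M l k * (x k : ℝ)| := Finset.abs_sum_le_sum_abs _ _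
          _ ≤ ∑ k, |M l k| * n := by
              refine Finset.sum_le_sum fun k _ => ?_
              rw [← mul_sub, abs_mul]
              exact mul_le_mul_of_nonneg_left (hb k) (abs_nonneg _)
          _ = (∑ k, |M l k|) * n := by rw [Finset.sum_mul]
          _ ≤ K * n := by
              refine mul_le_mul_of_nonneg_right ?_ hn0
              exact Finset.single_le_sum (f := fun l => ∑ k, |M l k|)
                (fun i _ => Finset.sum_nonneg fun j _ => abs_nonneg _) (Finset.mem_univ l)
      have hj := abs_le.1 (hdiff j)
      have hi := abs_le.1 (hdiff i)
      simp only [← mul_div_assoc]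
      rw [← Finset.sum_div, ← Finset.sum_div, ← sub_div, div_le_iff₀ hNpos]
      linarith [hj.2, hi.1]

/-- symmetric equilibrium -/
lemma symm_eq {I : Type*} [Fintype I] [Nontrivial I] (M : I → I → ℝ) :
    ∃ z ∈ stdSimplex ℝ I, ∀ i, z i ≠ 0 → ∀ j, ∑ k, M j k * z k ≤ ∑ k, M i k * z k := by
  classical
  let S : ℕ → Set (I → ℝ) := fun n => {z | z ∈ stdSimplex ℝ I ∧ ∀ i, z i ≤ 1 / ((n : ℝ) + 1) ∨
    ∀ j, ∑ k, M j k * z k - ∑ k, M i k * z k ≤ 1 / ((n : ℝ) + 1)}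
  have hcl : ∀ n, IsClosed (S n) := by
    intro n
    have hS : S n = stdSimplex ℝ I ∩ ⋂ i, ({z | z i ≤ 1 / ((n : ℝ) + 1)} ∪
        ⋂ j, {z | ∑ k, M j k * z k - ∑ k, M i k * z k ≤ 1 / ((n : ℝ) + 1)}) := by
      ext z; simp [S]
    rw [hS]
    refine (isCompact_stdSimplex ℝ I).isClosed.inter ?_
    refine isClosed_iInter fun i => ?_
    refine (isClosed_le (by fun_prop) (by fun_prop)).union ?_
    exact isClosed_iInter fun j => isClosed_le (by fun_prop) (by fun_prop)
  have hne := IsCompact.nonempty_iInter_of_sequence_nonempty_isCompact_isClosed S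
    (by
      rintro n z ⟨hz, h⟩
      have hle : 1 / (((n + 1 : ℕ) : ℝ) + 1) ≤ 1 / ((n : ℝ) + 1) := by
        apply one_div_le_one_div_of_le (by positivity); push_cast; linarith
      refine ⟨hz, fun i => ?_⟩
      rcases h i with h | h
      · exact Or.inl (h.trans hle)
      · exact Or.inr fun j => (h j).trans hle)
    (fun n => by
      obtain ⟨z, hz, h⟩ := approx M (1 / ((n : ℝ) + 1)) (by positivity)
      exact ⟨z, hz, h⟩)
    ((isCompact_stdSimplex ℝ I).of_isClosed_subset (hcl 0) (fun z hz => hz.1)) hcl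
  obtain ⟨z, hz⟩ := hne
  rw [Set.mem_iInter] at hz
  refine ⟨z, (hz 0).1, fun i hi j => ?_⟩
  have hpos : 0 < z i := lt_of_le_of_ne ((hz 0).1.1 i) (Ne.symm hi)
  by_contra hlt
  push Not at hlt
  obtain ⟨n, hn⟩ := exists_nat_one_div_lt (lt_min hpos (sub_pos.2 hlt))
  rw [lt_min_iff] at hn
  rcases (hz n).2 i with h | h
  · linarith [hn.1]
  · linarith [hn.2, h j]

end NashAux

/-- Proposition 2, Nash's existence theorem: every two-player game with
finite nonempty action sets and real-valued utilities has at least one mixed-strategy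
Nash equilibrium. -/
theorem stmt_2 {A1 A2 : Type*} [Fintype A1] [Fintype A2] [Nonempty A1] [Nonempty A2]
    (u1 u2 : A1 → A2 → ℝ) :
    ∃ p ∈ stdSimplex ℝ A1, ∃ q ∈ stdSimplex ℝ A2,
      (∀ p' ∈ stdSimplex ℝ A1,
        ∑ a : A1, ∑ b : A2, p' a * q b * u1 a b ≤ ∑ a : A1, ∑ b : A2, p a * q b * u1 a b) ∧
      (∀ q' ∈ stdSimplex ℝ A2,
        ∑ a : A1, ∑ b : A2, p a * q' b * u2 a b ≤ ∑ a : A1, ∑ b : A2, p a * q b * u2 a b) := by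
  classical
  obtain ⟨K, hK1, hK2⟩ : ∃ K : ℝ, (∀ a b, 0 < u1 a b + K) ∧ (∀ a b, 0 < u2 a b + K) := by
    refine ⟨∑ a, ∑ b, (|u1 a b| + |u2 a b|) + 1, ?_, ?_⟩ <;> intro a b <;>
    · have h1 := Finset.single_le_sum (f := fun b => |u1 a b| + |u2 a b|)
        (fun _ _ => by positivity) (Finset.mem_univ b)
      have h2 := Finset.single_le_sum (f := fun a => ∑ b, (|u1 a b| + |u2 a b|))
        (fun _ _ => Finset.sum_nonneg fun _ _ => by positivity) (Finset.mem_univ a)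
      have := neg_abs_le (u1 a b)
      have := neg_abs_le (u2 a b)
      have := abs_nonneg (u1 a b)
      have := abs_nonneg (u2 a b)
      linarith
  let M : A1 ⊕ A2 → A1 ⊕ A2 → ℝ := fun i j => match i, j with
    | Sum.inl a, Sum.inr b => u1 a b + K
    | Sum.inr b, Sum.inl a => u2 a b + K
    | _, _ => 0
  have : Nontrivial (A1 ⊕ A2) :=
    ⟨Sum.inl (Classical.arbitrary A1), Sum.inr (Classical.arbitrary A2), by simp⟩
  obtain ⟨z, ⟨hz0, hz1⟩, hz⟩ := NashAux.symm_eq M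
  simp only [Fintype.sum_sum_type, Sum.forall, M, zero_mul, Finset.sum_const_zero, zero_add,
    add_zero] at hz hz0 hz1
  obtain ⟨hzl, hzr⟩ := hz
  set x : A1 → ℝ := fun a => z (Sum.inl a) with hx
  set y : A2 → ℝ := fun b => z (Sum.inr b) with hy
  have hx0 : ∀ a, 0 ≤ x a := hz0.1
  have hy0 : ∀ b, 0 ≤ y b := hz0.2
  have hsum : ∑ a, x a + ∑ b, y b = 1 := hz1
  have hzl1 : ∀ a, x a ≠ 0 → ∀ a', ∑ b, (u1 a' b + K) * y b ≤ ∑ b, (u1 a b + K) * y b :=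
    fun a h => (hzl a h).1
  have hzl2 : ∀ a, x a ≠ 0 → ∀ b', ∑ a, (u2 a b' + K) * x a ≤ ∑ b, (u1 a b + K) * y b :=
    fun a h => (hzl a h).2
  have hzr1 : ∀ b, y b ≠ 0 → ∀ a', ∑ b, (u1 a' b + K) * y b ≤ ∑ a, (u2 a b + K) * x a :=
    fun a h => (hzr a h).1
  have hzr2 : ∀ b, y b ≠ 0 → ∀ b', ∑ a, (u2 a b' + K) * x a ≤ ∑ a, (u2 a b + K) * x a :=
    fun a h => (hzr a h).2
  have hexpos : (∃ a, x a ≠ 0) ∧ ∃ b, y b ≠ 0 := by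
    constructor
    · by_contra h
      push Not at h
      obtain ⟨b, hb⟩ : ∃ b, y b ≠ 0 := by
        by_contra h'
        push Not at h'
        simp [h, h'] at hsum
      have h3 := hzr1 b hb (Classical.arbitrary A1)
      simp only [h, mul_zero, Finset.sum_const_zero] at h3
      have : 0 < ∑ b, (u1 (Classical.arbitrary A1) b + K) * y b :=
        Finset.sum_pos' (fun b _ => mul_nonneg (hK1 _ _).le (hy0 b))
          ⟨b, Finset.mem_univ _, mul_pos (hK1 _ _) (lt_of_le_of_ne (hy0 b) hb.symm)⟩
      linarith
    · by_contra h
      push Not at h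
      obtain ⟨a, ha⟩ : ∃ a, x a ≠ 0 := by
        by_contra h'
        push Not at h'
        simp [h, h'] at hsum
      have h3 := hzl2 a ha (Classical.arbitrary A2)
      simp only [h, mul_zero, Finset.sum_const_zero] at h3
      have : 0 < ∑ a, (u2 a (Classical.arbitrary A2) + K) * x a :=
        Finset.sum_pos' (fun b _ => mul_nonneg (hK2 _ _).le (hx0 b))
          ⟨a, Finset.mem_univ _, mul_pos (hK2 _ _) (lt_of_le_of_ne (hx0 a) ha.symm)⟩
      linarith
  obtain ⟨⟨a0, ha0⟩, b0, hb0⟩ := hexpos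
  set s := ∑ a, x a with hs
  set t := ∑ b, y b with ht
  have hspos : 0 < s := Finset.sum_pos' (fun a _ => hx0 a)
    ⟨a0, Finset.mem_univ _, lt_of_le_of_ne (hx0 a0) ha0.symm⟩
  have htpos : 0 < t := Finset.sum_pos' (fun a _ => hy0 a)
    ⟨b0, Finset.mem_univ _, lt_of_le_of_ne (hy0 b0) hb0.symm⟩
  have hqs : ∑ b, y b / t = 1 := by rw [← Finset.sum_div, ← ht, div_self htpos.ne']
  have hps : ∑ a, x a / s = 1 := by rw [← Finset.sum_div, ← hs, div_self hspos.ne']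
  have hbr1 : ∀ a, x a ≠ 0 → ∀ a', ∑ b, y b / t * u1 a' b ≤ ∑ b, y b / t * u1 a b := by
    have e : ∀ a, ∑ b, y b / t * u1 a b = (∑ b, (u1 a b + K) * y b) / t - K := by
      intro a
      simp only [add_mul, Finset.sum_add_distrib, ← Finset.mul_sum, ← ht]
      rw [add_div, mul_div_assoc K, div_self htpos.ne', Finset.sum_div, mul_one, add_sub_cancel_right]
      exact Finset.sum_congr rfl fun b _ => by ring
    intro a h a'
    rw [e, e]
    have := div_le_div_of_nonneg_right (hzl1 a h a') htpos.le
    linarith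
  have hbr2 : ∀ b, y b ≠ 0 → ∀ b', ∑ a, x a / s * u2 a b' ≤ ∑ a, x a / s * u2 a b := by
    have e : ∀ b, ∑ a, x a / s * u2 a b = (∑ a, (u2 a b + K) * x a) / s - K := by
      intro a
      simp only [add_mul, Finset.sum_add_distrib, ← Finset.mul_sum, ← hs]
      rw [add_div, mul_div_assoc K, div_self hspos.ne', Finset.sum_div, mul_one, add_sub_cancel_right]
      exact Finset.sum_congr rfl fun b _ => by ring
    intro a h a'
    rw [e, e]
    have := div_le_div_of_nonneg_right (hzr2 a h a') hspos.le
    linarith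
  refine ⟨fun a => x a / s, ⟨fun a => div_nonneg (hx0 a) hspos.le, hps⟩,
    fun b => y b / t, ⟨fun b => div_nonneg (hy0 b) htpos.le, hqs⟩, ?_, ?_⟩
  · rintro p' ⟨hp0, hp1⟩
    set v := ∑ b, y b / t * u1 a0 b with hv
    calc ∑ a, ∑ b, p' a * (y b / t) * u1 a b
        = ∑ a, p' a * ∑ b, y b / t * u1 a b := by simp only [Finset.mul_sum, mul_assoc]
      _ ≤ ∑ a, p' a * v := Finset.sum_le_sum fun a _ =>
          mul_le_mul_of_nonneg_left (hbr1 a0 ha0 a) (hp0 a)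
      _ = ∑ a, x a / s * v := by rw [← Finset.sum_mul, ← Finset.sum_mul, hp1, hps]
      _ = ∑ a, x a / s * ∑ b, y b / t * u1 a b := by
          refine Finset.sum_congr rfl fun a _ => ?_
          by_cases h : x a = 0
          · simp [h]
          · rw [hv, le_antisymm (hbr1 a h a0) (hbr1 a0 ha0 a)]
      _ = _ := by simp only [Finset.mul_sum, mul_assoc]
  · rintro q' ⟨hq0, hq1⟩
    set v := ∑ a, x a / s * u2 a b0 with hv
    have hsw : ∀ q : A2 → ℝ, ∑ a, ∑ b, x a / s * q b * u2 a b
        = ∑ b, q b * ∑ a, x a / s * u2 a b := by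
      intro q
      rw [Finset.sum_comm]
      simp only [Finset.mul_sum]
      exact Finset.sum_congr rfl fun b _ => Finset.sum_congr rfl fun a _ => by ring
    rw [hsw, hsw]
    calc ∑ b, q' b * ∑ a, x a / s * u2 a b
        ≤ ∑ b, q' b * v := Finset.sum_le_sum fun b _ =>
          mul_le_mul_of_nonneg_left (hbr2 b0 hb0 b) (hq0 b)
      _ = ∑ b, y b / t * v := by rw [← Finset.sum_mul, ← Finset.sum_mul, hq1, hqs]
      _ = ∑ b, y b / t * ∑ a, x a / s * u2 a b := by
          refine Finset.sum_congr rfl fun b _ => ?_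
          by_cases h : y b = 0
          · simp [h]
          · rw [hv, le_antisymm (hbr2 b h b0) (hbr2 b0 hb0 b)]
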